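/- arXiv:2512.05486 — 5 statements merged into one kernel-verified Lean document; each statement's English description precedes it below -/
import Mathlib

section
/- Let r ≥ 2 and let A, U, B, V, X be r×r complex matrices, where V has the V-structure, X has the X-structure, and the inherent quadratic stability (IQS) conditions hold, i.e., rows 3 through r of B·A coincide with rows 3 through r of X·B, and rows 3 through r of B·U coincide with rows 3 through r of X·V − V·X. Then for every ω ∈ ℂ such that both I − ωA and I − ωX are invertible, there exist a, b ∈ ℂ such that the characteristic polynomial of the stability matrix M(ω) = V + ω B (I − ωA)⁻¹ U equals X^{r−2}·(X² − a·X + b). -/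
open Matrix

theorem charpoly_aux {n : ℕ} (N : Matrix (Fin (2 + n)) (Fin (2 + n)) ℂ)
    (hN : ∀ i j : Fin (2 + n), 2 ≤ (i : ℕ) → (j : ℕ) ≤ (i : ℕ) → N i j = 0) :
    ∃ a b : ℂ, N.charpoly = Polynomial.X ^ n *
      (Polynomial.X ^ 2 - Polynomial.C a * Polynomial.X + Polynomial.C b) := by
  let e := (finSumFinEquiv (m := 2) (n := n)).symm
  let P := Matrix.reindex e e N
  have h1 : P.charpoly = N.charpoly := Matrix.charpoly_reindex e N
  have h21 : P.toBlocks₂₁ = 0 := by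
    ext i j
    apply hN <;> simp [e] <;> omega
  have h22 : ∀ i j, j ≤ i → P.toBlocks₂₂ i j = 0 := by
    intro i j hij
    apply hN <;> simp [e] <;> exact hij
  have h3 : P.toBlocks₂₂.charpoly = Polynomial.X ^ n := by
    rw [Matrix.charpoly_of_isUpperTriangular]
    · simp [h22]
    · intro i j hij
      exact h22 i j (le_of_lt hij)
  refine ⟨P.toBlocks₁₁.trace, P.toBlocks₁₁.det, ?_⟩
  rw [← h1, ← Matrix.fromBlocks_toBlocks P, h21, Matrix.charpoly_fromBlocks_zero₂₁, h3,
    Matrix.charpoly_fin_two, mul_comm]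
  simp

/-- For r ≥ 2 and r×r complex matrices A, U, B, V, X with V having the
V-structure, X having the X-structure, and the IQS conditions holding (rows 3..r of B·A
equal rows 3..r of X·B, rows 3..r of B·U equal rows 3..r of X·V − V·X), for every ω ∈ ℂ
with I − ωA and I − ωX invertible, the characteristic polynomial of
M(ω) = V + ω B (I − ωA)⁻¹ U has the quadratic form X^(r−2)·(X² − a X + b). -/
theorem stmt_0 {r : ℕ} (hr : 2 ≤ r)
    (A U B V X : Matrix (Fin r) (Fin r) ℂ)
    -- V-structure
    (hV1 : V ⟨0, by omega⟩ ⟨0, by omega⟩ = 1)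
    (hV0 : ∀ i j : Fin r, 1 ≤ (i : ℕ) → (j : ℕ) ≤ (i : ℕ) → V i j = 0)
    -- X-structure
    (hXsub : ∀ i j : Fin r, 2 ≤ (i : ℕ) → (j : ℕ) = (i : ℕ) - 1 → X i j = 1)
    (hXzero : ∀ i j : Fin r, 2 ≤ (i : ℕ) → (j : ℕ) ≠ (i : ℕ) - 1 → (j : ℕ) ≠ r - 1 →
      X i j = 0)
    -- IQS conditions (rows 3 through r, i.e. 0-based indices i with i ≥ 2)
    (hIQS1 : ∀ i j : Fin r, 2 ≤ (i : ℕ) → (B * A) i j = (X * B) i j)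
    (hIQS2 : ∀ i j : Fin r, 2 ≤ (i : ℕ) → (B * U) i j = (X * V - V * X) i j)
    (ω : ℂ) (hA : IsUnit (1 - ω • A)) (hX : IsUnit (1 - ω • X)) :
    ∃ a b : ℂ,
      (V + ω • (B * (1 - ω • A)⁻¹ * U)).charpoly =
        Polynomial.X ^ (r - 2) *
          (Polynomial.X ^ 2 - Polynomial.C a * Polynomial.X + Polynomial.C b) := by
  have key : ∀ i j : Fin r, 2 ≤ (i : ℕ) →
      ((1 - ω • X) * (V + ω • (B * (1 - ω • A)⁻¹ * U))) i j = (V * (1 - ω • X)) i j := by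
    intro i j hi
    have hdet : IsUnit (1 - ω • A).det := (Matrix.isUnit_iff_isUnit_det _).1 hA
    have e1 : ∀ k, (B - ω • (X * B)) i k = (B * (1 - ω • A)) i k := by
      intro k
      simp [Matrix.mul_sub, ← hIQS1 i k hi]
    have e2 : ((B - ω • (X * B)) * ((1 - ω • A)⁻¹ * U)) i j = (B * U) i j := by
      have : B * U = (B * (1 - ω • A)) * ((1 - ω • A)⁻¹ * U) := by
        rw [Matrix.mul_assoc, Matrix.mul_nonsing_inv_cancel_left _ _ hdet]
      rw [this, Matrix.mul_apply, Matrix.mul_apply]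
      exact Finset.sum_congr rfl fun k _ => by rw [e1 k]
    have e3 : (1 - ω • X) * (V + ω • (B * (1 - ω • A)⁻¹ * U)) =
        V - ω • (X * V) + ω • ((B - ω • (X * B)) * ((1 - ω • A)⁻¹ * U)) := by
      simp only [Matrix.mul_add, Matrix.sub_mul, Matrix.one_mul, Matrix.smul_mul,
        Matrix.mul_smul, Matrix.mul_assoc, smul_sub]
    rw [e3, Matrix.add_apply, Matrix.smul_apply, e2, hIQS2 i j hi]
    simp [Matrix.mul_sub]
    ring
  obtain ⟨u, hu⟩ := hX
  have hc := Matrix.charpoly_units_conj u (V + ω • (B * (1 - ω • A)⁻¹ * U))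
  rw [← Matrix.coe_units_inv] at hc
  rw [← hc]
  have hN : ∀ i j : Fin r, 2 ≤ (i : ℕ) → (j : ℕ) ≤ (i : ℕ) →
      (u.val * (V + ω • (B * (1 - ω • A)⁻¹ * U)) * u⁻¹.val) i j = 0 := by
    intro i j hi hij
    have : (u.val * (V + ω • (B * (1 - ω • A)⁻¹ * U)) * u⁻¹.val) i j
        = ((V * u.val) * u⁻¹.val) i j := by
      rw [Matrix.mul_apply, Matrix.mul_apply]
      refine Finset.sum_congr rfl fun k _ => ?_
      rw [hu, key i k hi]
    rw [this, Matrix.mul_assoc, Units.mul_inv, Matrix.mul_one]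
    exact hV0 i j (by omega) hij
  generalize u.val * (V + ω • (B * (1 - ω • A)⁻¹ * U)) * u⁻¹.val = N at hN ⊢
  clear * - hN hr
  obtain ⟨n, rfl⟩ := Nat.exists_eq_add_of_le hr
  rw [Nat.add_sub_cancel_left]
  exact charpoly_aux N hN
end

section
/- Let r ≥ 2, λ ∈ ℂ, and let A, U, B, V, X be r×r complex matrices, where A is lower triangular with all diagonal entries equal to λ, V has the V-structure, X has the X-structure, and the inherent quadratic stability (IQS) conditions hold, i.e., rows 3 through r of B·A coincide with rows 3 through r of X·B, and rows 3 through r of B·U coincide with rows 3 through r of X·V − V·X. Then there exist polynomials P₁, P₀ ∈ ℂ[Y] of degree at most r with P₁(0) = 1 and P₀(0) = 0 such that for every ω ∈ ℂ with 1 − λω ≠ 0, one has (1−λω)^r · charpoly(M(ω)) = X^{r−2} · ( (1−λω)^r · X² − P₁(ω)·X + P₀(ω) ), where M(ω) = V + ω B (I − ωA)⁻¹ U. -/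
open Matrix

theorem aux_dvd {r : ℕ} (N : Matrix (Fin r) (Fin r) ℂ)
    (h : ∀ i j : Fin r, 2 ≤ (i : ℕ) → (j : ℕ) ≤ (i : ℕ) → N i j = 0) :
    (Polynomial.X : Polynomial ℂ) ^ (r - 2) ∣ N.charpoly := by
  unfold Matrix.charpoly
  rw [Matrix.twoBlockTriangular_det (charmatrix N) (fun i : Fin r => (i : ℕ) < 2)]
  · apply Dvd.dvd.mul_left
    rw [Matrix.det_of_upperTriangular]
    · have : ∀ i : {i : Fin r // ¬ (i : ℕ) < 2},
          (toSquareBlockProp (charmatrix N) fun i : Fin r => ¬ (i : ℕ) < 2) i i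
            = Polynomial.X := by
        intro i
        have := h i i (by have := i.2; omega) le_rfl
        simp [toSquareBlockProp, Matrix.charmatrix_apply_eq, this]
      rw [Finset.prod_congr rfl (fun i _ => this i)]
      rw [Finset.prod_const]
      apply pow_dvd_pow
      rw [Finset.card_univ, Fintype.card_subtype_compl, Fintype.card_fin]
      apply Nat.sub_le_sub_left
      rw [Fintype.card_subtype]
      calc _ = ((Finset.univ.filter (fun i : Fin r => (i : ℕ) < 2)).map Fin.valEmbedding).card := by
              rw [Finset.card_map]
        _ ≤ (Finset.range 2).card := by
              apply Finset.card_le_card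
              intro x
              simp
              intro y hy hx
              omega
        _ = 2 := by simp
    · intro i j hij
      have hij' : (j : Fin r) < (i : Fin r) := hij
      have h1 := h i j (by have := i.2; omega) (le_of_lt hij')
      simp [toSquareBlockProp, Matrix.charmatrix_apply_ne _ _ _ (ne_of_gt hij'), h1]
  · intro i hi j hj
    have hne : i ≠ j := by rintro rfl; exact hi hj
    rw [Matrix.charmatrix_apply_ne _ _ _ hne, h i j (by omega) (by omega)]
    simp

theorem aux_det {r : ℕ} (lam ω : ℂ) (A : Matrix (Fin r) (Fin r) ℂ)
    (hAlow : ∀ i j : Fin r, (i : ℕ) < (j : ℕ) → A i j = 0)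
    (hAdiag : ∀ i : Fin r, A i i = lam) :
    (1 - ω • A).det = (1 - lam * ω) ^ r := by
  rw [Matrix.det_of_lowerTriangular]
  · simp [hAdiag, mul_comm]
  · intro i j hij
    have hij' : i < j := hij
    simp [hAlow i j hij', Matrix.one_apply_ne (ne_of_lt hij')]

theorem aux_poly {r : ℕ} (lam : ℂ)
    (A U B V : Matrix (Fin r) (Fin r) ℂ)
    (hAlow : ∀ i j : Fin r, (i : ℕ) < (j : ℕ) → A i j = 0)
    (hAdiag : ∀ i : Fin r, A i i = lam) :
    ∃ P : ℕ → Polynomial ℂ, (∀ k, (P k).degree ≤ r) ∧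
      ∀ ω : ℂ, 1 - lam * ω ≠ 0 → ∀ k, (P k).eval ω =
        (1 - lam * ω) ^ r * (V + ω • (B * (1 - ω • A)⁻¹ * U)).charpoly.coeff k := by
  let c : ℂ →+* Polynomial (Polynomial ℂ) := Polynomial.C.comp Polynomial.C
  let W : Matrix (Fin r ⊕ Fin r) (Fin r ⊕ Fin r) (Polynomial (Polynomial ℂ)) :=
    Matrix.fromBlocks (1 - (Polynomial.X : Polynomial (Polynomial ℂ)) • A.map c) (U.map c)
      ((Polynomial.X : Polynomial (Polynomial ℂ)) • B.map c) ((charmatrix V).map Polynomial.C)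
  have hdeg : W.det.natDegree ≤ r := by
    rw [Matrix.det_apply]
    apply Polynomial.natDegree_sum_le_of_forall_le
    intro σ _
    refine (Polynomial.natDegree_smul_le _ _).trans ?_
    refine (Polynomial.natDegree_prod_le _ _).trans ?_
    rw [Fintype.sum_sum_type]
    have h1 : ∀ i : Fin r, (W (σ (Sum.inl i)) (Sum.inl i)).natDegree ≤ 1 := by
      intro i
      rcases σ (Sum.inl i) with j | j
      · simp only [W, c, Matrix.fromBlocks_apply₁₁, Matrix.sub_apply, Matrix.smul_apply,
          Matrix.map_apply, smul_eq_mul, Matrix.one_apply, RingHom.comp_apply]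
        split_ifs <;> compute_degree
      · simp only [W, c, Matrix.fromBlocks_apply₂₁, Matrix.smul_apply,
          Matrix.map_apply, smul_eq_mul, RingHom.comp_apply]
        compute_degree
    have h2 : ∀ i : Fin r, (W (σ (Sum.inr i)) (Sum.inr i)).natDegree ≤ 0 := by
      intro i
      rcases σ (Sum.inr i) with j | j
      · simp [W, c]
      · simp [W, c]
    calc _ ≤ ∑ i : Fin r, 1 + ∑ i : Fin r, 0 :=
          add_le_add (Finset.sum_le_sum fun i _ => h1 i) (Finset.sum_le_sum fun i _ => h2 i)
      _ = r := by simp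
  refine ⟨fun k => ∑ j ∈ Finset.range (r + 1),
    Polynomial.monomial j ((W.det.coeff j).coeff k), ?_, ?_⟩
  · intro k
    refine (Polynomial.degree_sum_le _ _).trans ?_
    apply Finset.sup_le
    intro j hj
    refine (Polynomial.degree_monomial_le _ _).trans ?_
    have := Finset.mem_range.1 hj
    exact_mod_cast (by omega : j ≤ r)
  · intro ω hω k
    have hdet := aux_det lam ω A hAlow hAdiag
    have hunit : IsUnit (1 - ω • A).det := by
      rw [hdet]; exact (pow_ne_zero _ hω).isUnit
    have key : W.det.eval (Polynomial.C ω) = Polynomial.C ((1 - lam * ω) ^ r) *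
        (V + ω • (B * (1 - ω • A)⁻¹ * U)).charpoly := by
      rw [← Polynomial.coe_evalRingHom, RingHom.map_det]
      have hW : (Polynomial.evalRingHom (Polynomial.C ω)).mapMatrix W =
          Matrix.fromBlocks ((1 - ω • A).map Polynomial.C) (U.map Polynomial.C)
            ((ω • B).map Polynomial.C) (charmatrix V) := by
        ext i j : 1
        rcases i with i | i <;> rcases j with j | j
        · by_cases hij : i = j
          · subst hij; simp [W, c]; ring
          · simp [W, c, hij]; ring
        · simp [W, c]
        · simp [W, c]; ring
        · simp [W, c]
      rw [hW]
      let E : Matrix (Fin r) (Fin r) (Polynomial ℂ) := ((1 - ω • A)⁻¹).map Polynomial.C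
      have hE1 : (1 - ω • A).map Polynomial.C * E = 1 := by
        rw [← Matrix.map_mul, Matrix.mul_nonsing_inv _ hunit]; simp
      have hE2 : E * (1 - ω • A).map Polynomial.C = 1 := by
        rw [← Matrix.map_mul, Matrix.nonsing_inv_mul _ hunit]; simp
      letI : Invertible ((1 - ω • A).map (Polynomial.C : ℂ →+* Polynomial ℂ)) :=
        ⟨E, hE2, hE1⟩
      rw [Matrix.det_fromBlocks₁₁]
      congr 1
      · rw [← hdet, RingHom.map_det]; rfl
      · unfold Matrix.charpoly
        congr 1
        change charmatrix V - (ω • B).map Polynomial.C * E * U.map Polynomial.C = _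
        rw [← Matrix.map_mul, ← Matrix.map_mul]
        unfold charmatrix
        rw [map_add, ← sub_sub]
        simp [RingHom.mapMatrix_apply]
    have h3 := congrArg (fun p => Polynomial.coeff p k) key
    simp only [Polynomial.coeff_C_mul] at h3
    rw [← h3, Polynomial.eval_eq_sum_range' (Nat.lt_succ_of_le hdeg)]
    simp only [Polynomial.eval_finset_sum, Polynomial.eval_monomial, Polynomial.finset_sum_coeff,
      ← Polynomial.C_pow, Polynomial.coeff_mul_C]

theorem aux_van {r : ℕ} (ω : ℂ)
    (A U B V X : Matrix (Fin r) (Fin r) ℂ)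
    (hV0 : ∀ i j : Fin r, 1 ≤ (i : ℕ) → (j : ℕ) ≤ (i : ℕ) → V i j = 0)
    (hIQS1 : ∀ i j : Fin r, 2 ≤ (i : ℕ) → (B * A) i j = (X * B) i j)
    (hIQS2 : ∀ i j : Fin r, 2 ≤ (i : ℕ) → (B * U) i j = (X * V - V * X) i j)
    (hA : IsUnit (1 - ω • A).det) (hX : IsUnit (1 - ω • X).det) :
    (Polynomial.X : Polynomial ℂ) ^ (r - 2) ∣
      (V + ω • (B * (1 - ω • A)⁻¹ * U)).charpoly := by
  set M := V + ω • (B * (1 - ω • A)⁻¹ * U) with hM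
  set S := 1 - ω • X with hS
  have hconj : (S * M * S⁻¹).charpoly = M.charpoly := by
    have := Matrix.charpoly_units_conj (Matrix.nonsingInvUnit S hX) M
    exact this
  rw [← hconj]
  -- left multiplication respects equality of a row
  have rowmul : ∀ (P Q R : Matrix (Fin r) (Fin r) ℂ) (i : Fin r),
      (∀ j, P i j = Q i j) → ∀ j, (P * R) i j = (Q * R) i j := by
    intro P Q R i h j
    simp only [Matrix.mul_apply, h]
  have e1 : ∀ i : Fin r, 2 ≤ (i : ℕ) → ∀ j, (S * B) i j = (B * (1 - ω • A)) i j := by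
    intro i hi j
    have := hIQS1 i j hi
    simp [hS, sub_mul, mul_sub, this]
  have e2 : ∀ i : Fin r, 2 ≤ (i : ℕ) → ∀ j, (S * M) i j = (V * S) i j := by
    intro i hi j
    have a := rowmul _ _ ((1 - ω • A)⁻¹ * U) i (e1 i hi) j
    have b : B * (1 - ω • A) * ((1 - ω • A)⁻¹ * U) = B * U := by
      rw [Matrix.mul_assoc, Matrix.mul_nonsing_inv_cancel_left _ _ hA]
    rw [b, hIQS2 i j hi] at a
    have d : S * M = S * V + ω • (S * B * ((1 - ω • A)⁻¹ * U)) := by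
      rw [hM, mul_add, Matrix.mul_smul]; simp only [Matrix.mul_assoc]
    rw [d, Matrix.add_apply, Matrix.smul_apply, a]
    simp [hS, sub_mul, mul_sub]
  apply aux_dvd
  intro i j hi hj
  rw [rowmul _ _ S⁻¹ i (e2 i hi) j, Matrix.mul_assoc, Matrix.mul_nonsing_inv _ hX, mul_one]
  exact hV0 i j (by omega) hj

/-- For r ≥ 2, λ ∈ ℂ, and r×r complex matrices A, U, B, V, X where A is
lower triangular with all diagonal entries λ, V has the V-structure, X has the
X-structure and the IQS conditions hold, there exist polynomials P₁, P₀ of degree ≤ r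
with P₁(0) = 1, P₀(0) = 0 such that for every ω with 1 − λω ≠ 0,
(1−λω)^r · charpoly(M(ω)) = X^(r−2)·((1−λω)^r X² − P₁(ω) X + P₀(ω)). -/
theorem stmt_1 {r : ℕ} (hr : 2 ≤ r) (lam : ℂ)
    (A U B V X : Matrix (Fin r) (Fin r) ℂ)
    -- A lower triangular with diagonal entries λ
    (hAlow : ∀ i j : Fin r, (i : ℕ) < (j : ℕ) → A i j = 0)
    (hAdiag : ∀ i : Fin r, A i i = lam)
    -- V-structure
    (hV1 : V ⟨0, by omega⟩ ⟨0, by omega⟩ = 1)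
    (hV0 : ∀ i j : Fin r, 1 ≤ (i : ℕ) → (j : ℕ) ≤ (i : ℕ) → V i j = 0)
    -- X-structure
    (hXsub : ∀ i j : Fin r, 2 ≤ (i : ℕ) → (j : ℕ) = (i : ℕ) - 1 → X i j = 1)
    (hXzero : ∀ i j : Fin r, 2 ≤ (i : ℕ) → (j : ℕ) ≠ (i : ℕ) - 1 → (j : ℕ) ≠ r - 1 →
      X i j = 0)
    -- IQS conditions (rows 3 through r, i.e. 0-based indices i with i ≥ 2)
    (hIQS1 : ∀ i j : Fin r, 2 ≤ (i : ℕ) → (B * A) i j = (X * B) i j)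
    (hIQS2 : ∀ i j : Fin r, 2 ≤ (i : ℕ) → (B * U) i j = (X * V - V * X) i j) :
    ∃ P₁ P₀ : Polynomial ℂ, P₁.degree ≤ r ∧ P₀.degree ≤ r ∧
      P₁.eval 0 = 1 ∧ P₀.eval 0 = 0 ∧
      ∀ ω : ℂ, 1 - lam * ω ≠ 0 →
        Polynomial.C ((1 - lam * ω) ^ r) *
            (V + ω • (B * (1 - ω • A)⁻¹ * U)).charpoly =
          Polynomial.X ^ (r - 2) *
            (Polynomial.C ((1 - lam * ω) ^ r) * Polynomial.X ^ 2 -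
              Polynomial.C (P₁.eval ω) * Polynomial.X +
              Polynomial.C (P₀.eval ω)) := by
  obtain ⟨P, hPdeg, hP⟩ := aux_poly lam A U B V hAlow hAdiag
  have hV : V.charpoly = (Polynomial.X - 1) * Polynomial.X ^ (r - 1) := by
    obtain ⟨n, rfl⟩ : ∃ n, r = n + 1 := ⟨r - 1, by omega⟩
    rw [Matrix.charpoly_of_upperTriangular, Fin.prod_univ_succ]
    · have h0 : V 0 0 = 1 := hV1
      have h1 : ∀ i : Fin n, V i.succ i.succ = 0 := fun i => hV0 _ _ (by simp) le_rfl
      simp [h0, h1]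
    · intro i j hij
      have hij' : j < i := hij
      exact hV0 i j (by have : (j : ℕ) < i := hij'; omega) (le_of_lt hij')
  have hP0 : ∀ k, (P k).eval 0 = V.charpoly.coeff k := by
    intro k
    have := hP 0 (by simp) k
    simpa using this
  have hvan : ∀ k, k < r - 2 → P k = 0 := by
    intro k hk
    have h1 : P k * ((1 - Polynomial.C lam * Polynomial.X) * X.charpolyRev) = 0 := by
      apply Polynomial.funext
      intro ω
      have hrev : X.charpolyRev.eval ω = (1 - ω • X).det := by
        unfold Matrix.charpolyRev
        rw [← Polynomial.coe_evalRingHom, RingHom.map_det]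
        congr 1
        ext i j
        by_cases hij : i = j
        · subst hij; simp; ring
        · simp [hij]; ring
      simp only [Polynomial.eval_mul, Polynomial.eval_sub, Polynomial.eval_one, Polynomial.eval_C,
        Polynomial.eval_X, Polynomial.eval_zero, hrev]
      by_cases hω : 1 - lam * ω = 0
      · simp [hω]
      by_cases hX : (1 - ω • X).det = 0
      · simp [hX]
      have hA : IsUnit (1 - ω • A).det := by
        rw [aux_det lam ω A hAlow hAdiag]; exact (pow_ne_zero _ hω).isUnit
      have hd := aux_van ω A U B V X hV0 hIQS1 hIQS2 hA (Ne.isUnit hX)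
      rw [hP ω hω k, Polynomial.X_pow_dvd_iff.1 hd k hk]
      simp
    rcases mul_eq_zero.1 h1 with h | h
    · exact h
    · exfalso
      have := congrArg (Polynomial.eval 0) h
      simp [Matrix.eval_charpolyRev] at this
  refine ⟨-P (r - 1), P (r - 2), by rw [Polynomial.degree_neg]; exact hPdeg _, hPdeg _, ?_, ?_, ?_⟩
  · rw [Polynomial.eval_neg, hP0, hV, Polynomial.coeff_mul_X_pow']
    simp
  · rw [hP0, hV, Polynomial.coeff_mul_X_pow', if_neg (by omega)]
  · intro ω hω
    set M := V + ω • (B * (1 - ω • A)⁻¹ * U)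
    have hdegM : M.charpoly.natDegree = r := by
      rw [Matrix.charpoly_natDegree_eq_dim, Fintype.card_fin]
    have hlead : M.charpoly.coeff r = 1 := by
      have := M.charpoly_monic.coeff_natDegree
      rwa [hdegM] at this
    obtain ⟨n, rfl⟩ : ∃ n, r = n + 2 := ⟨r - 2, by omega⟩
    have hP' : ∀ k, (P k).eval ω = (1 - lam * ω) ^ (n + 2) * M.charpoly.coeff k := hP ω hω
    generalize (1 - lam * ω) ^ (n + 2) = d at hP' ⊢
    clear_value M
    ext k
    rw [Polynomial.coeff_C_mul, Polynomial.coeff_X_pow_mul']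
    simp only [Nat.add_sub_cancel, Polynomial.eval_neg] at hvan ⊢
    split_ifs with hk
    · obtain ⟨m, rfl⟩ : ∃ m, k = m + n := ⟨k - n, by omega⟩
      rw [Nat.add_sub_cancel]
      rcases m with _ | _ | _ | m
      · simp [hP']
      · have : n + 2 - 1 = 0 + 1 + n := by omega
        rw [this]
        simp [hP', Polynomial.coeff_X_pow, Polynomial.coeff_C]
      · have : 0 + 1 + 1 + n = n + 2 := by omega
        rw [this, hlead]
        simp [Polynomial.coeff_X, Polynomial.coeff_C]
      · rw [Polynomial.coeff_eq_zero_of_natDegree_lt (by omega : M.charpoly.natDegree < _)]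
        simp [Polynomial.coeff_X, Polynomial.coeff_C, Polynomial.coeff_X_pow]
    · rw [← hP', hvan k (by omega)]
      simp
end

section
/- Let r ≥ 2 and let A, U, B, V, X be r×r complex matrices such that rows 3 through r of B·A coincide with rows 3 through r of X·B, and rows 3 through r of B·U coincide with rows 3 through r of X·V − V·X. Then for every ω ∈ ℂ with I − ωA invertible, rows 3 through r of the matrix (I − ωX)·M(ω) coincide with rows 3 through r of V·(I − ωX), where M(ω) = V + ω B (I − ωA)⁻¹ U. -/
open Matrix

/-- If rows 3..r of B·A coincide with rows 3..r of X·B and rows 3..r of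
B·U coincide with rows 3..r of X·V − V·X, then for every ω with I − ωA invertible,
rows 3..r of (I − ωX)·M(ω) coincide with rows 3..r of V·(I − ωX), where
M(ω) = V + ω B (I − ωA)⁻¹ U. -/
theorem stmt_2 {r : ℕ} (hr : 2 ≤ r)
    (A U B V X : Matrix (Fin r) (Fin r) ℂ)
    (hIQS1 : ∀ i j : Fin r, 2 ≤ (i : ℕ) → (B * A) i j = (X * B) i j)
    (hIQS2 : ∀ i j : Fin r, 2 ≤ (i : ℕ) → (B * U) i j = (X * V - V * X) i j)
    (ω : ℂ) (hA : IsUnit (1 - ω • A)) :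
    ∀ i j : Fin r, 2 ≤ (i : ℕ) →
      ((1 - ω • X) * (V + ω • (B * (1 - ω • A)⁻¹ * U))) i j =
        (V * (1 - ω • X)) i j := by
  intro i j hi
  have hR : (1 - ω • A) * (1 - ω • A)⁻¹ = 1 :=
    Matrix.mul_nonsing_inv _ ((Matrix.isUnit_iff_isUnit_det _).mp hA)
  generalize (1 - ω • A)⁻¹ = R at hR ⊢
  have hR' : R = 1 + ω • (A * R) := by
    rw [sub_mul, one_mul, smul_mul_assoc] at hR
    exact sub_eq_iff_eq_add.mp hR
  have hBRU : B * R * U = B * U + ω • (B * A * (R * U)) := by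
    conv_lhs => rw [hR']
    simp only [mul_add, add_mul, mul_one, mul_smul_comm, smul_mul_assoc, mul_assoc]
  have key : (1 - ω • X) * (V + ω • (B * R * U)) =
      V * (1 - ω • X) + (ω • (B * U - (X * V - V * X))
        + (ω * ω) • ((B * A - X * B) * (R * U))) := by
    have h2 : (1 - ω • X) * (V + ω • (B * R * U)) =
        V - ω • (X * V) + ω • (B * R * U) - (ω * ω) • (X * B * (R * U)) := by
      simp only [mul_add, sub_mul, one_mul, mul_smul_comm, smul_mul_assoc, mul_assoc, smul_smul,
        smul_sub]
      abel
    rw [h2, hBRU]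
    simp only [mul_sub, sub_mul, mul_one, mul_smul_comm, smul_add, smul_sub, smul_smul]
    abel
  rw [key]
  have h1 : (B * U - (X * V - V * X)) i j = 0 := by
    rw [Matrix.sub_apply (B * U), hIQS2 i j hi, sub_self]
  have h3 : ((B * A - X * B) * (R * U)) i j = 0 := by
    rw [Matrix.mul_apply]
    refine Finset.sum_eq_zero fun k _ => ?_
    rw [Matrix.sub_apply, hIQS1 i k hi, sub_self, zero_mul]
  rw [Matrix.add_apply, Matrix.add_apply, Matrix.smul_apply, Matrix.smul_apply, h1, h3]
  simp
end

section
/- Let r ≥ 2 and let A, U, B, V, X be r×r complex matrices such that rows 3 through r of B·A coincide with rows 3 through r of X·B, and rows 3 through r of B·U coincide with rows 3 through r of X·V − V·X. Then for every ω ∈ ℂ such that both I − ωA and I − ωX are invertible, rows 3 through r of the conjugated matrix (I − ωX)·M(ω)·(I − ωX)⁻¹ coincide with rows 3 through r of V, where M(ω) = V + ω B (I − ωA)⁻¹ U. -/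
open Matrix

/-- If rows 3..r of B·A coincide with rows 3..r of X·B and rows 3..r of
B·U coincide with rows 3..r of X·V − V·X, then for every ω with I − ωA and I − ωX
invertible, rows 3..r of (I − ωX)·M(ω)·(I − ωX)⁻¹ coincide with rows 3..r of V,
where M(ω) = V + ω B (I − ωA)⁻¹ U. -/
theorem stmt_3 {r : ℕ} (hr : 2 ≤ r)
    (A U B V X : Matrix (Fin r) (Fin r) ℂ)
    (hIQS1 : ∀ i j : Fin r, 2 ≤ (i : ℕ) → (B * A) i j = (X * B) i j)
    (hIQS2 : ∀ i j : Fin r, 2 ≤ (i : ℕ) → (B * U) i j = (X * V - V * X) i j)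
    (ω : ℂ) (hA : IsUnit (1 - ω • A)) (hX : IsUnit (1 - ω • X)) :
    ∀ i j : Fin r, 2 ≤ (i : ℕ) →
      ((1 - ω • X) * (V + ω • (B * (1 - ω • A)⁻¹ * U)) * (1 - ω • X)⁻¹) i j =
        V i j := by
  intro i j hi
  have hA' : (1 - ω • A) * (1 - ω • A)⁻¹ = 1 :=
    Matrix.mul_nonsing_inv _ ((Matrix.isUnit_iff_isUnit_det _).mp hA)
  have hX' : (1 - ω • X) * (1 - ω • X)⁻¹ = 1 :=
    Matrix.mul_nonsing_inv _ ((Matrix.isUnit_iff_isUnit_det _).mp hX)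
  generalize (1 - ω • A)⁻¹ = N at *
  generalize (1 - ω • X)⁻¹ = K at *
  have hD : ∀ k, (B * A - X * B) i k = 0 := fun k => by
    rw [Matrix.sub_apply, hIQS1 i k hi, sub_self]
  have hE : ∀ k, (B * U - (X * V - V * X)) i k = 0 := fun k => by
    rw [Matrix.sub_apply, hIQS2 i k hi, sub_self]
  have hrow : ∀ P Q : Matrix (Fin r) (Fin r) ℂ, (∀ k, P i k = 0) → ∀ k, (P * Q) i k = 0 := by
    intro P Q h k
    simp [Matrix.mul_apply, h]
  have h1 : (1 - ω • X) * B = B * (1 - ω • A) + ω • (B * A - X * B) := by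
    simp only [sub_mul, mul_sub, smul_mul_assoc, mul_smul_comm, one_mul, mul_one, smul_sub]
    abel
  have h2 : (1 - ω • X) * (B * N * U) = B * U + ω • ((B * A - X * B) * (N * U)) := by
    calc _ = ((1 - ω • X) * B) * (N * U) := by simp only [mul_assoc]
      _ = B * (((1 - ω • A) * N) * U) + ω • ((B * A - X * B) * (N * U)) := by
        rw [h1, add_mul, smul_mul_assoc]; simp only [mul_assoc]
      _ = _ := by rw [hA', one_mul]
  have h3 : (1 - ω • X) * (V + ω • (B * N * U)) = V * (1 - ω • X)
      + (ω • (B * U - (X * V - V * X)) + ω • ω • ((B * A - X * B) * (N * U))) := by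
    rw [mul_add, mul_smul_comm, h2]
    simp only [sub_mul, mul_sub, smul_mul_assoc, mul_smul_comm, one_mul, mul_one, smul_sub,
      smul_add]
    abel
  rw [h3, add_mul, mul_assoc, hX', mul_one, Matrix.add_apply, hrow, add_zero]
  intro k
  rw [Matrix.add_apply, Matrix.smul_apply, Matrix.smul_apply, Matrix.smul_apply, hE,
    hrow _ _ hD]
  simp
end

section
/- Let r ≥ 1 and let V be an r×r complex matrix with the V-structure, i.e., V₁₁ = 1 and V_{ij} = 0 whenever i ≥ 2 and j ≤ i (1-based indexing). Then the powers of V stabilize: for every n ≥ r − 1 one has Vⁿ = V^{r−1}. In particular the family of powers {Vⁿ : n ∈ ℕ} is finite, so V is power bounded. -/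
open Matrix

/-- Let r ≥ 1 and let V be an r×r complex matrix with the V-structure.
Then Vⁿ = V^(r−1) for every n ≥ r − 1; in particular the set of powers of V is
finite, so V is power bounded. -/
theorem stmt_8 {r : ℕ} (hr : 1 ≤ r)
    (V : Matrix (Fin r) (Fin r) ℂ)
    (hV1 : V ⟨0, by omega⟩ ⟨0, by omega⟩ = 1)
    (hV0 : ∀ i j : Fin r, 1 ≤ (i : ℕ) → (j : ℕ) ≤ (i : ℕ) → V i j = 0) :
    (∀ n : ℕ, r - 1 ≤ n → V ^ n = V ^ (r - 1)) ∧
      (Set.range fun n : ℕ => V ^ n).Finite := by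
  have key : ∀ k : ℕ, ∀ i j : Fin r, 1 ≤ (i : ℕ) → (j : ℕ) < (i : ℕ) + k →
      (V ^ k) i j = 0 := by
    intro k
    induction k with
    | zero =>
      intro i j _ hj
      rw [pow_zero]
      exact Matrix.one_apply_ne (fun h => by subst h; omega)
    | succ k ih =>
      intro i j hi hj
      rw [pow_succ', Matrix.mul_apply]
      apply Finset.sum_eq_zero
      intro l _
      by_cases h : (l : ℕ) ≤ i
      · rw [hV0 i l hi h, zero_mul]
      · rw [ih l j (by omega) (by omega), mul_zero]
  have step : V * V ^ (r - 1) = V ^ (r - 1) := by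
    ext i j
    rw [Matrix.mul_apply, Finset.sum_eq_single (⟨0, by omega⟩ : Fin r)]
    · by_cases hi : 1 ≤ (i : ℕ)
      · rw [hV0 i _ hi (Nat.zero_le _), zero_mul, key (r - 1) i j hi (by omega)]
      · have h0 : i = ⟨0, by omega⟩ := Fin.ext (by simp; omega)
        rw [h0, hV1, one_mul]
    · intro l _ hl
      have hl' : (l : ℕ) ≠ 0 := fun h => hl (Fin.ext h)
      rw [key (r - 1) l j (by omega) (by omega), mul_zero]
    · intro h
      exact absurd (Finset.mem_univ _) h
  have main : ∀ n : ℕ, r - 1 ≤ n → V ^ n = V ^ (r - 1) := by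
    intro n hn
    induction n, hn using Nat.le_induction with
    | base => rfl
    | succ n _ ih => rw [pow_succ', ih, step]
  refine ⟨main, ?_⟩
  refine ((Set.finite_Iic (r - 1)).image (fun n : ℕ => V ^ n)).subset ?_
  rintro _ ⟨n, rfl⟩
  by_cases h : n ≤ r - 1
  · exact ⟨n, h, rfl⟩
  · exact ⟨r - 1, Set.mem_Iic.mpr (le_refl _), (main n (by omega)).symm⟩
end
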